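/- arXiv:1405.7891 — 4 statements merged into one kernel-verified Lean document; each statement's English description precedes it below -/
import Mathlib

section
/- Let Q(x,y) = x⁴ + y⁴ − 6x²y² and G(x,y) = Q(x,y) · log(x² + y²), defined for (x,y) ∈ ℝ² \ {(0,0)}. Then for every (x,y) ≠ (0,0), the Laplacian of G satisfies ΔG(x,y) = 16 Q(x,y) / (x² + y²). -/
/-!
Since `log (x² + y²)` is harmonic off the origin, the product rule gives, for smooth `u`,
`Δ(u log (x² + y²)) = Δu · log (x² + y²) + 4 (x ∂u/∂x + y ∂u/∂y) / (x² + y²)`.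
Since `Q = Re (x + iy)⁴` is harmonic, the first term vanishes for `u = Q`; since `Q` is homogeneous
of degree `4`, Euler's identity turns the second into `16 Q / (x² + y²)`.
-/

/-- Partial derivative in the first variable. -/
noncomputable def pdx (f : ℝ → ℝ → ℝ) (x y : ℝ) : ℝ := deriv (fun t => f t y) x

/-- Partial derivative in the second variable. -/
noncomputable def pdy (f : ℝ → ℝ → ℝ) (x y : ℝ) : ℝ := deriv (fun t => f x t) y

/-- The polynomial `Q(x,y) = x⁴ + y⁴ − 6 x² y²`. -/
def Q (x y : ℝ) : ℝ := x ^ 4 + y ^ 4 - 6 * x ^ 2 * y ^ 2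

/-- `G(x,y) = Q(x,y) log(x² + y²)`. -/
noncomputable def G (x y : ℝ) : ℝ := Q x y * Real.log (x ^ 2 + y ^ 2)

/-- The Laplacian `∂²f/∂x² + ∂²f/∂y²` of a function on the plane in curried form, as iterated
one-variable derivatives. -/
noncomputable def planarLaplacian (f : ℝ → ℝ → ℝ) (x y : ℝ) : ℝ :=
  pdx (pdx f) x y + pdy (pdy f) x y

/-- The logarithmic potential `log (x² + y²)` of the plane, with the junk value `0` at the
origin. -/
noncomputable def logNormSq (x y : ℝ) : ℝ := Real.log (x ^ 2 + y ^ 2)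

theorem deriv_deriv_fun_mul {𝕜 A : Type*} [NontriviallyNormedField 𝕜] [NormedRing A]
    [NormedAlgebra 𝕜 A] {f g : 𝕜 → A} {x : 𝕜}
    (hf : ContDiffAt 𝕜 2 f x) (hg : ContDiffAt 𝕜 2 g x) :
    deriv (deriv fun t => f t * g t) x =
      f x * deriv (deriv g) x + 2 * deriv f x * deriv g x + deriv (deriv f) x * g x := by
  simpa [Finset.sum_range_succ, iteratedDeriv_succ] using iteratedDeriv_fun_mul hf hg

theorem planarLaplacian_fun_mul {u v : ℝ → ℝ → ℝ} {x y : ℝ}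
    (hu : ContDiffAt ℝ 2 (fun p : ℝ × ℝ => u p.1 p.2) (x, y))
    (hv : ContDiffAt ℝ 2 (fun p : ℝ × ℝ => v p.1 p.2) (x, y)) :
    planarLaplacian (fun s t => u s t * v s t) x y =
      planarLaplacian u x y * v x y
        + 2 * (pdx u x y * pdx v x y + pdy u x y * pdy v x y)
        + u x y * planarLaplacian v x y := by
  have hux : ContDiffAt ℝ 2 (fun t => u t y) x :=
    hu.comp₂ contDiffAt_id contDiffAt_const
  have hvx : ContDiffAt ℝ 2 (fun t => v t y) x :=
    hv.comp₂ contDiffAt_id contDiffAt_const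
  have huy : ContDiffAt ℝ 2 (fun t => u x t) y :=
    hu.comp₂ contDiffAt_const contDiffAt_id
  have hvy : ContDiffAt ℝ 2 (fun t => v x t) y :=
    hv.comp₂ contDiffAt_const contDiffAt_id
  have hxx : pdx (pdx fun s t => u s t * v s t) x y =
      u x y * pdx (pdx v) x y + 2 * pdx u x y * pdx v x y + pdx (pdx u) x y * v x y :=
    deriv_deriv_fun_mul hux hvx
  have hyy : pdy (pdy fun s t => u s t * v s t) x y =
      u x y * pdy (pdy v) x y + 2 * pdy u x y * pdy v x y + pdy (pdy u) x y * v x y :=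
    deriv_deriv_fun_mul huy hvy
  simp only [planarLaplacian, hxx, hyy]
  ring

theorem pdy_of_comm {f : ℝ → ℝ → ℝ} (hf : ∀ x y, f x y = f y x) (x y : ℝ) :
    pdy f x y = pdx f y x := by
  simp only [pdx, pdy, hf x]

theorem pdy_pdy_of_comm {f : ℝ → ℝ → ℝ} (hf : ∀ x y, f x y = f y x) (x y : ℝ) :
    pdy (pdy f) x y = pdx (pdx f) y x :=
  congrArg (deriv · y) (funext (pdy_of_comm hf x))

section LogNormSq

variable {x y : ℝ}

theorem contDiffAt_logNormSq {n : WithTop ℕ∞} (hr : x ^ 2 + y ^ 2 ≠ 0) :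
    ContDiffAt ℝ n (fun p : ℝ × ℝ => logNormSq p.1 p.2) (x, y) :=
  ContDiffAt.log (by fun_prop) hr

theorem logNormSq_comm (x y : ℝ) : logNormSq x y = logNormSq y x := by
  rw [logNormSq, logNormSq, add_comm]

theorem pdx_logNormSq (hr : x ^ 2 + y ^ 2 ≠ 0) :
    pdx logNormSq x y = 2 * x / (x ^ 2 + y ^ 2) := by
  refine (((hasDerivAt_pow 2 x).add_const (y ^ 2)).log hr).deriv.trans ?_
  ring

theorem pdy_logNormSq (hr : x ^ 2 + y ^ 2 ≠ 0) :
    pdy logNormSq x y = 2 * y / (x ^ 2 + y ^ 2) := by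
  rw [add_comm] at hr ⊢
  rw [pdy_of_comm logNormSq_comm, pdx_logNormSq hr]

theorem pdx_pdx_logNormSq (hr : x ^ 2 + y ^ 2 ≠ 0) :
    pdx (pdx logNormSq) x y = 2 * (y ^ 2 - x ^ 2) / (x ^ 2 + y ^ 2) ^ 2 := by
  have hcont : ContinuousAt (fun t : ℝ => t ^ 2 + y ^ 2) x := by fun_prop
  have hpdx : (fun t => pdx logNormSq t y) =ᶠ[nhds x] fun t => 2 * t / (t ^ 2 + y ^ 2) :=
    (hcont.eventually_ne hr).mono fun t ht => pdx_logNormSq ht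
  have hquot := ((hasDerivAt_id' x).const_mul 2).fun_div ((hasDerivAt_pow 2 x).add_const (y ^ 2)) hr
  rw [pdx, hpdx.deriv_eq, hquot.deriv]
  ring

theorem pdy_pdy_logNormSq (hr : x ^ 2 + y ^ 2 ≠ 0) :
    pdy (pdy logNormSq) x y = 2 * (x ^ 2 - y ^ 2) / (x ^ 2 + y ^ 2) ^ 2 := by
  rw [add_comm] at hr ⊢
  rw [pdy_pdy_of_comm logNormSq_comm, pdx_pdx_logNormSq hr]

theorem planarLaplacian_logNormSq (hr : x ^ 2 + y ^ 2 ≠ 0) :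
    planarLaplacian logNormSq x y = 0 := by
  rw [planarLaplacian, pdx_pdx_logNormSq hr, pdy_pdy_logNormSq hr]
  ring

theorem planarLaplacian_fun_mul_logNormSq {u : ℝ → ℝ → ℝ}
    (hu : ContDiffAt ℝ 2 (fun p : ℝ × ℝ => u p.1 p.2) (x, y)) (hr : x ^ 2 + y ^ 2 ≠ 0) :
    planarLaplacian (fun s t => u s t * logNormSq s t) x y =
      planarLaplacian u x y * logNormSq x y
        + 4 * (x * pdx u x y + y * pdy u x y) / (x ^ 2 + y ^ 2) := by
  rw [planarLaplacian_fun_mul hu (contDiffAt_logNormSq hr), pdx_logNormSq hr, pdy_logNormSq hr,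
    planarLaplacian_logNormSq hr]
  ring

end LogNormSq

section Q

variable (x y : ℝ)

theorem contDiff_Q {n : WithTop ℕ∞} : ContDiff ℝ n fun p : ℝ × ℝ => Q p.1 p.2 := by
  unfold Q
  fun_prop

theorem Q_comm : Q x y = Q y x := by
  unfold Q
  ring

theorem pdx_Q : pdx Q x y = 4 * x ^ 3 - 12 * x * y ^ 2 := by
  have h := ((hasDerivAt_pow 4 x).add_const (y ^ 4)).fun_sub
    (((hasDerivAt_pow 2 x).const_mul 6).mul_const (y ^ 2))
  refine h.deriv.trans ?_
  ring

theorem pdy_Q : pdy Q x y = 4 * y ^ 3 - 12 * y * x ^ 2 := by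
  rw [pdy_of_comm Q_comm, pdx_Q]

theorem pdx_pdx_Q : pdx (pdx Q) x y = 12 * x ^ 2 - 12 * y ^ 2 := by
  have h := ((hasDerivAt_pow 3 x).const_mul 4).fun_sub
    (((hasDerivAt_id' x).const_mul 12).mul_const (y ^ 2))
  rw [pdx]
  simp only [pdx_Q]
  refine h.deriv.trans ?_
  ring

theorem pdy_pdy_Q : pdy (pdy Q) x y = 12 * y ^ 2 - 12 * x ^ 2 := by
  rw [pdy_pdy_of_comm Q_comm, pdx_pdx_Q]

theorem planarLaplacian_Q : planarLaplacian Q x y = 0 := by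
  rw [planarLaplacian, pdx_pdx_Q, pdy_pdy_Q]
  ring

theorem euler_identity_Q : x * pdx Q x y + y * pdy Q x y = 4 * Q x y := by
  rw [pdx_Q, pdy_Q, Q]
  ring

end Q

/-- Away from the origin, `ΔG(x,y) = 16 Q(x,y) / (x² + y²)`. -/
theorem laplacian_G (x y : ℝ) (h : (x, y) ≠ ((0 : ℝ), (0 : ℝ))) :
    pdx (pdx G) x y + pdy (pdy G) x y = 16 * Q x y / (x ^ 2 + y ^ 2) := by
  have hr : x ^ 2 + y ^ 2 ≠ 0 := by
    contrapose! h
    rwa [Prod.mk.injEq, ← mul_self_add_mul_self_eq_zero, ← sq, ← sq]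
  calc pdx (pdx G) x y + pdy (pdy G) x y
      = planarLaplacian (fun s t => Q s t * logNormSq s t) x y := rfl
    _ = planarLaplacian Q x y * logNormSq x y
        + 4 * (x * pdx Q x y + y * pdy Q x y) / (x ^ 2 + y ^ 2) :=
      planarLaplacian_fun_mul_logNormSq contDiff_Q.contDiffAt hr
    _ = 16 * Q x y / (x ^ 2 + y ^ 2) := by
      rw [planarLaplacian_Q, euler_identity_Q]
      ring
end

section
/- Let Q(x,y) = x⁴ + y⁴ − 6x²y² and G(x,y) = Q(x,y) · log(x² + y²), defined for (x,y) ∈ ℝ² \ {(0,0)}. Then for every pair i, j ∈ {1,2}, the second partial derivative ∂ᵢ∂ⱼ(ΔG) is bounded on the punctured unit ball B₁ \ {0}: there exists M > 0 such that |∂ᵢ∂ⱼΔG(x,y)| ≤ M for all (x,y) with 0 < x² + y² < 1. -/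
/-- Partial derivative in the `i`-th variable, `i ∈ {1, 2}` encoded as `Fin 2`. -/
noncomputable def pd (i : Fin 2) : (ℝ → ℝ → ℝ) → ℝ → ℝ → ℝ :=
  if i = 0 then pdx else pdy

/-- The Laplacian `Δf = ∂²f/∂x² + ∂²f/∂y²`. -/
noncomputable def lap (f : ℝ → ℝ → ℝ) (x y : ℝ) : ℝ :=
  pdx (pdx f) x y + pdy (pdy f) x y

open InnerProductSpace Laplacian Gradient Topology

section PosHomogeneous

variable {E F : Type*} [NormedAddCommGroup E] [NormedSpace ℝ E]
  [NormedAddCommGroup F] [NormedSpace ℝ F] {a : ℝ} {f : E → F} {x : E}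

/-- Positive homogeneity of degree `a`. The origin is left out, so that the junk values which
functions such as `log ‖x‖` and `1 / ‖x‖ ^ 2` take there do not matter. -/
def PosHomogeneous (a : ℝ) (f : E → F) : Prop :=
  ∀ ⦃c : ℝ⦄, 0 < c → ∀ ⦃x : E⦄, x ≠ 0 → f (c • x) = c ^ a • f x

protected theorem PosHomogeneous.fderiv (hf : PosHomogeneous a f) :
    PosHomogeneous (a - 1) (fderiv ℝ f) := by
  intro c hc x hx
  have hscale : (fun y => f (c • y)) =ᶠ[𝓝 x] c ^ a • f := by
    filter_upwards [isOpen_ne.mem_nhds hx] with y hy using hf hc hy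
  have hchain : c • fderiv ℝ f (c • x) = c ^ a • fderiv ℝ f x := by
    rw [← fderiv_comp_smul, hscale.fderiv_eq, fderiv_const_smul_field, Pi.smul_apply]
  rw [Real.rpow_sub_one hc.ne', div_eq_inv_mul, mul_smul, ← hchain, inv_smul_smul₀ hc.ne']

theorem PosHomogeneous.fderiv_apply_self (hf : PosHomogeneous a f) (hx : x ≠ 0)
    (hdiff : DifferentiableAt ℝ f x) : fderiv ℝ f x x = a • f x := by
  have hray : HasDerivAt (fun c : ℝ => f (c • x)) (fderiv ℝ f x x) 1 := by
    have hline : HasDerivAt (fun c : ℝ => c • x) x 1 := by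
      simpa using (hasDerivAt_id (1 : ℝ)).smul_const x
    exact HasFDerivAt.comp_hasDerivAt 1 (by simpa using hdiff.hasFDerivAt) hline
  have hpow : HasDerivAt (fun c : ℝ => c ^ a • f x) (a • f x) 1 := by
    simpa using (Real.hasDerivAt_rpow_const (p := a) (.inl one_ne_zero)).smul_const (f x)
  refine hray.unique (hpow.congr_of_eventuallyEq ?_)
  filter_upwards [lt_mem_nhds one_pos] with c hc using hf hc hx

theorem PosHomogeneous.exists_norm_le [ProperSpace E] (hf : PosHomogeneous 0 f)
    (hcont : ContinuousOn f {0}ᶜ) : ∃ M > 0, ∀ x ≠ 0, ‖f x‖ ≤ M := by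
  have hsphere : Metric.sphere (0 : E) 1 ⊆ {0}ᶜ := fun x hx =>
    Metric.ne_of_mem_sphere hx one_ne_zero
  obtain ⟨C, hC⟩ := (isCompact_sphere (0 : E) 1).exists_bound_of_continuousOn (hcont.mono hsphere)
  refine ⟨max C 1, by positivity, fun x hx => le_max_of_le_left ?_⟩
  have hradial : f (‖x‖⁻¹ • x) = f x := by
    rw [hf (by positivity) hx, Real.rpow_zero, one_smul]
  rw [← hradial]
  exact hC _ (by simp [norm_smul, hx])

theorem PosHomogeneous.exists_norm_fderiv_fderiv_le [ProperSpace E] (hf : PosHomogeneous 2 f)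
    (hsmooth : ContDiffOn ℝ 2 f {0}ᶜ) :
    ∃ M > 0, ∀ x ≠ 0, ‖fderiv ℝ (fderiv ℝ f) x‖ ≤ M := by
  have hdegree : PosHomogeneous 0 (fderiv ℝ (fderiv ℝ f)) := by
    convert hf.fderiv.fderiv using 1
    norm_num
  have hD : ContDiffOn ℝ 1 (fderiv ℝ f) {0}ᶜ :=
    hsmooth.fderiv_of_isOpen isOpen_compl_singleton (by norm_num)
  exact hdegree.exists_norm_le (hD.continuousOn_fderiv_of_isOpen isOpen_compl_singleton le_rfl)

end PosHomogeneous

section Laplacian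

theorem fderiv_fderiv_mul_apply {E : Type*} [NormedAddCommGroup E] [NormedSpace ℝ E]
    {f g : E → ℝ} {x : E} (hf : ContDiffAt ℝ 2 f x) (hg : ContDiffAt ℝ 2 g x) (v w : E) :
    fderiv ℝ (fderiv ℝ (fun y => f y * g y)) x v w =
      f x * fderiv ℝ (fderiv ℝ g) x v w +
        (fderiv ℝ f x v * fderiv ℝ g x w + fderiv ℝ f x w * fderiv ℝ g x v) +
        g x * fderiv ℝ (fderiv ℝ f) x v w := by
  have hDfg : fderiv ℝ (fun y => f y * g y) =ᶠ[𝓝 x]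
      fun y => f y • fderiv ℝ g y + g y • fderiv ℝ f y := by
    filter_upwards [hf.eventually (by simp), hg.eventually (by simp)] with y hfy hgy
    exact fderiv_fun_mul (hfy.differentiableAt two_ne_zero) (hgy.differentiableAt two_ne_zero)
  have hf' := hf.differentiableAt two_ne_zero
  have hg' := hg.differentiableAt two_ne_zero
  have hDf : DifferentiableAt ℝ (fderiv ℝ f) x :=
    (hf.fderiv_right (m := 1) (by norm_num)).differentiableAt one_ne_zero
  have hDg : DifferentiableAt ℝ (fderiv ℝ g) x :=
    (hg.fderiv_right (m := 1) (by norm_num)).differentiableAt one_ne_zero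
  rw [hDfg.fderiv_eq, fderiv_fun_add (hf'.fun_smul hDg) (hg'.fun_smul hDf), fderiv_fun_smul hf' hDg,
    fderiv_fun_smul hg' hDf]
  simp only [add_apply, smul_apply, ContinuousLinearMap.smulRight_apply, smul_eq_mul]
  ring

variable {E : Type*} [NormedAddCommGroup E] [InnerProductSpace ℝ E]

theorem laplacian_mul [FiniteDimensional ℝ E] {f g : E → ℝ} {x : E} (hf : ContDiffAt ℝ 2 f x)
    (hg : ContDiffAt ℝ 2 g x) :
    Δ (fun y => f y * g y) x = f x * Δ g x + 2 * inner ℝ (∇ f x) (∇ g x) + g x * Δ f x := by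
  let b := stdOrthonormalBasis ℝ E
  have hgrad : inner ℝ (∇ f x) (∇ g x) = ∑ i, fderiv ℝ f x (b i) * fderiv ℝ g x (b i) := by
    rw [← b.sum_inner_mul_inner]
    refine Finset.sum_congr rfl fun i _ => ?_
    rw [inner_gradient_left, real_inner_comm, inner_gradient_left]
  simp only [laplacian_eq_iteratedFDeriv_orthonormalBasis _ b, iteratedFDeriv_two_apply,
    Matrix.cons_val_zero, Matrix.cons_val_one, fderiv_fderiv_mul_apply hf hg, ← two_mul,
    hgrad, Finset.sum_add_distrib, Finset.mul_sum]

theorem hasGradientAt_log_norm_sq [CompleteSpace E] {x : E} (hx : x ≠ 0) :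
    HasGradientAt (fun y : E => Real.log (‖y‖ ^ 2)) ((2 / ‖x‖ ^ 2) • x) x := by
  rw [hasGradientAt_iff_hasFDerivAt]
  have hnorm : ‖x‖ ^ 2 ≠ 0 := by positivity
  refine ((hasStrictFDerivAt_norm_sq x).hasFDerivAt.log hnorm).congr_fderiv ?_
  ext v
  simp only [smul_apply, coe_innerSL_apply, nsmul_eq_mul, Nat.cast_ofNat, smul_eq_mul, map_smul,
    toDual_apply_apply]
  ring

theorem harmonicAt_log_norm_sq {z : ℂ} (hz : z ≠ 0) :
    HarmonicAt (fun w : ℂ => Real.log (‖w‖ ^ 2)) z := by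
  simpa only [norm_pow] using
    AnalyticAt.harmonicAt_log_norm (f := fun w => w ^ 2) (by fun_prop) (pow_ne_zero 2 hz)

theorem PosHomogeneous.laplacian_mul_log_norm_sq {a : ℝ} {h : ℂ → ℝ} {z : ℂ}
    (hhom : PosHomogeneous a h) (hharm : HarmonicAt h z) (hz : z ≠ 0) :
    Δ (fun w => h w * Real.log (‖w‖ ^ 2)) z = 4 * a * h z / ‖z‖ ^ 2 := by
  have hlog := harmonicAt_log_norm_sq hz
  have hEuler : inner ℝ (∇ h z) z = a * h z := by
    rw [inner_gradient_left]
    exact hhom.fderiv_apply_self hz (hharm.1.differentiableAt two_ne_zero)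
  rw [laplacian_mul hharm.1 hlog.1, hharm.2.eq_of_nhds, hlog.2.eq_of_nhds,
    (hasGradientAt_log_norm_sq hz).gradient, real_inner_smul_right, hEuler]
  simp only [Pi.zero_apply]
  ring

end Laplacian

section ComplexPlane

variable {f : ℝ → ℝ → ℝ} {z : ℂ}

/-- The function on `ℂ` given by a function of two real variables; transporting to `ℂ` provides the
Euclidean norm and the library's Laplacian and harmonic functions. -/
def onComplex (f : ℝ → ℝ → ℝ) (z : ℂ) : ℝ := f z.re z.im

theorem onComplex_pd (i : Fin 2) (hf : DifferentiableAt ℝ (onComplex f) z) :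
    onComplex (pd i f) z = fderiv ℝ (onComplex f) z (Complex.orthonormalBasisOneI i) := by
  rw [← hf.lineDeriv_eq_fderiv]
  fin_cases i
  · simpa [onComplex, pd, pdx, lineDeriv] using
      (deriv_comp_const_add (fun t => f t z.im) z.re 0).symm
  · simpa [onComplex, pd, pdy, lineDeriv] using
      (deriv_comp_const_add (fun t => f z.re t) z.im 0).symm

theorem onComplex_pd_pd (i j : Fin 2) (hf : ContDiffAt ℝ 2 (onComplex f) z) :
    onComplex (pd i (pd j f)) z =
      fderiv ℝ (fderiv ℝ (onComplex f)) z
        (Complex.orthonormalBasisOneI i) (Complex.orthonormalBasisOneI j) := by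
  have hpd : onComplex (pd j f) =ᶠ[𝓝 z]
      fun w => fderiv ℝ (onComplex f) w (Complex.orthonormalBasisOneI j) := by
    filter_upwards [hf.eventually (by simp)] with w hw
    exact onComplex_pd j (hw.differentiableAt two_ne_zero)
  have hD : DifferentiableAt ℝ (fderiv ℝ (onComplex f)) z :=
    (hf.fderiv_right (m := 1) (by norm_num)).differentiableAt one_ne_zero
  have hDj := hD.clm_apply (differentiableAt_const (Complex.orthonormalBasisOneI j))
  rw [onComplex_pd i (hDj.congr_of_eventuallyEq hpd), hpd.fderiv_eq,
    fderiv_clm_apply hD (differentiableAt_const _)]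
  simp

theorem onComplex_lap (hf : ContDiffAt ℝ 2 (onComplex f) z) :
    onComplex (lap f) z = Δ (onComplex f) z := by
  have hlap : onComplex (lap f) z = ∑ i, onComplex (pd i (pd i f)) z := by
    simp [Fin.sum_univ_two, onComplex, lap, pd]
  simp only [hlap, onComplex_pd_pd _ _ hf, iteratedFDeriv_two_apply, Matrix.cons_val_zero,
    Matrix.cons_val_one,
    laplacian_eq_iteratedFDeriv_orthonormalBasis _ Complex.orthonormalBasisOneI]

end ComplexPlane

theorem onComplex_Q : onComplex Q = fun z => (z ^ 4).re := by
  ext z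
  simp only [onComplex, Q, pow_succ, pow_zero, one_mul, Complex.mul_re, Complex.mul_im]
  ring

theorem harmonicAt_onComplex_Q (z : ℂ) : HarmonicAt (onComplex Q) z := by
  rw [onComplex_Q]
  exact AnalyticAt.harmonicAt_re (by fun_prop)

theorem posHomogeneous_onComplex_Q : PosHomogeneous 4 (onComplex Q) := by
  intro c _ z _
  norm_cast
  simp only [onComplex, Q, Complex.smul_re, Complex.smul_im, smul_eq_mul]
  ring

theorem onComplex_G : onComplex G = fun z => onComplex Q z * Real.log (‖z‖ ^ 2) := by
  ext z
  rw [Complex.sq_norm, Complex.normSq_apply, ← sq, ← sq]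
  rfl

theorem onComplex_lap_G {z : ℂ} (hz : z ≠ 0) :
    onComplex (lap G) z = 16 * onComplex Q z / ‖z‖ ^ 2 := by
  have hQ := harmonicAt_onComplex_Q z
  have hG : ContDiffAt ℝ 2 (onComplex G) z := by
    rw [onComplex_G]
    exact hQ.1.mul (harmonicAt_log_norm_sq hz).1
  rw [onComplex_lap hG, onComplex_G,
    posHomogeneous_onComplex_Q.laplacian_mul_log_norm_sq hQ hz]
  norm_num

theorem posHomogeneous_onComplex_lap_G : PosHomogeneous 2 (onComplex (lap G)) := by
  intro c hc z hz
  rw [onComplex_lap_G (smul_ne_zero hc.ne' hz), onComplex_lap_G hz,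
    posHomogeneous_onComplex_Q hc hz, norm_smul, Real.norm_of_nonneg hc.le]
  norm_cast
  simp only [smul_eq_mul]
  field_simp

theorem contDiffOn_onComplex_lap_G : ContDiffOn ℝ 2 (onComplex (lap G)) {0}ᶜ := by
  have hQ : ContDiffOn ℝ 2 (onComplex Q) {0}ᶜ := fun z _ =>
    (harmonicAt_onComplex_Q z).1.contDiffWithinAt
  refine ContDiffOn.congr ?_ fun z hz => onComplex_lap_G hz
  exact (contDiffOn_const.mul hQ).div (contDiff_norm_sq ℝ).contDiffOn fun z hz =>
    pow_ne_zero 2 (norm_ne_zero_iff.2 hz)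

theorem second_derivs_of_laplacian_G_bounded_general :
    ∀ i j : Fin 2, ∃ M > (0 : ℝ), ∀ x y : ℝ,
      0 < x ^ 2 + y ^ 2 → |pd i (pd j (lap G)) x y| ≤ M := by
  intro i j
  obtain ⟨M, hM, hbound⟩ :=
    posHomogeneous_onComplex_lap_G.exists_norm_fderiv_fderiv_le contDiffOn_onComplex_lap_G
  refine ⟨M, hM, fun x y hs => ?_⟩
  let b := Complex.orthonormalBasisOneI
  let z : ℂ := ⟨x, y⟩
  have hz : z ≠ 0 := by
    intro h
    have hx : x = 0 := congrArg Complex.re h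
    have hy : y = 0 := congrArg Complex.im h
    simp [hx, hy] at hs
  have hsmooth : ContDiffAt ℝ 2 (onComplex (lap G)) z :=
    contDiffOn_onComplex_lap_G.contDiffAt (isOpen_compl_singleton.mem_nhds hz)
  calc |pd i (pd j (lap G)) x y|
      = ‖fderiv ℝ (fderiv ℝ (onComplex (lap G))) z (b i) (b j)‖ :=
        congrArg abs (onComplex_pd_pd i j hsmooth)
    _ ≤ ‖fderiv ℝ (fderiv ℝ (onComplex (lap G))) z‖ * ‖b i‖ * ‖b j‖ :=
        ContinuousLinearMap.le_opNorm₂ _ _ _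
    _ ≤ M := by simpa only [b.norm_eq_one, mul_one] using hbound z hz

/-- All second partial derivatives `∂ᵢ∂ⱼ(ΔG)` are bounded on the punctured unit ball. -/
theorem second_derivs_of_laplacian_G_bounded :
    ∀ i j : Fin 2, ∃ M > (0 : ℝ), ∀ x y : ℝ,
      0 < x ^ 2 + y ^ 2 → x ^ 2 + y ^ 2 < 1 →
      |pd i (pd j (lap G)) x y| ≤ M := by
  intro i j
  obtain ⟨M, hM, hbound⟩ := second_derivs_of_laplacian_G_bounded_general i j
  exact ⟨M, hM, fun x y hs _ => hbound x y hs⟩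
end

section
/- Let Q(x,y) = x⁴ + y⁴ − 6x²y² and G(x,y) = Q(x,y) · log(x² + y²), defined for (x,y) ∈ ℝ² \ {(0,0)}. Then there exists a function H, bounded on the punctured unit ball B₁ \ {0}, such that ∂⁴G/∂x²∂y²(x,y) = −24 log(x² + y²) + H(x,y) for all 0 < x² + y² < 1. In particular ∂⁴G/∂x²∂y² has a logarithmic singularity at the origin. -/
open scoped ContDiff Topology

section Homogeneous

variable {E : Type*} [NormedAddCommGroup E] [NormedSpace ℝ E] {d e : ℤ} {f g ρ P : E → ℝ}

/-- Smoothness and positive homogeneity of integer degree `d`, both required only off the origin: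
the degree may be negative, so the value at `0` is left unconstrained. -/
structure IsSmoothHomogeneous (d : ℤ) (f : E → ℝ) : Prop where
  contDiffOn : ContDiffOn ℝ ∞ f {0}ᶜ
  map_smul : ∀ ⦃c : ℝ⦄ ⦃p : E⦄, 0 < c → p ≠ 0 → f (c • p) = c ^ d * f p

namespace IsSmoothHomogeneous

protected lemma zero : IsSmoothHomogeneous d (0 : E → ℝ) :=
  ⟨contDiffOn_const, by simp⟩

protected lemma add (hf : IsSmoothHomogeneous d f) (hg : IsSmoothHomogeneous d g) :
    IsSmoothHomogeneous d (f + g) where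
  contDiffOn := hf.contDiffOn.add hg.contDiffOn
  map_smul c p hc hp := by
    simp only [Pi.add_apply, hf.map_smul hc hp, hg.map_smul hc hp, mul_add]

protected lemma mul (hf : IsSmoothHomogeneous d f) (hg : IsSmoothHomogeneous e g) :
    IsSmoothHomogeneous (d + e) (f * g) where
  contDiffOn := hf.contDiffOn.mul hg.contDiffOn
  map_smul c p hc hp := by
    simp only [Pi.mul_apply, hf.map_smul hc hp, hg.map_smul hc hp, zpow_add₀ hc.ne']
    ring

protected lemma div (hf : IsSmoothHomogeneous d f) (hg : IsSmoothHomogeneous e g)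
    (hg₀ : ∀ p ≠ 0, g p ≠ 0) : IsSmoothHomogeneous (d - e) (f / g) where
  contDiffOn := hf.contDiffOn.div hg.contDiffOn hg₀
  map_smul c p hc hp := by
    simp only [Pi.div_apply, hf.map_smul hc hp, hg.map_smul hc hp, zpow_sub₀ hc.ne']
    exact mul_div_mul_comm _ _ _ _

lemma differentiableAt (hf : IsSmoothHomogeneous d f) {p : E} (hp : p ≠ 0) :
    DifferentiableAt ℝ f p :=
  (hf.contDiffOn.contDiffAt (isOpen_ne.mem_nhds hp)).differentiableAt (by simp)

protected lemma lineDeriv (hf : IsSmoothHomogeneous d f) (v : E) :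
    IsSmoothHomogeneous (d - 1) (fun p ↦ lineDeriv ℝ f p v) where
  contDiffOn := by
    have hfderiv : ContDiffOn ℝ ∞ (fun p ↦ fderiv ℝ f p v) {0}ᶜ :=
      (hf.contDiffOn.fderiv_of_isOpen isOpen_ne (by simp)).clm_apply contDiffOn_const
    exact hfderiv.congr fun p hp ↦ (hf.differentiableAt hp).lineDeriv_eq_fderiv
  map_smul c p hc hp := by
    have hcp : c • p ≠ 0 := smul_ne_zero hc.ne' hp
    have hscale : (fun q ↦ f (c • q)) =ᶠ[𝓝 p] c ^ d • f := by
      filter_upwards [isOpen_ne.mem_nhds hp] with q hq using hf.map_smul hc hq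
    have hchain : c • fderiv ℝ f (c • p) = c ^ d • fderiv ℝ f p := by
      rw [← fderiv_comp_smul, hscale.fderiv_eq, fderiv_const_smul_field, Pi.smul_apply]
    have hmul : c * fderiv ℝ f (c • p) v = c ^ d * fderiv ℝ f p v := by
      simpa using DFunLike.congr_fun hchain v
    rw [(hf.differentiableAt hcp).lineDeriv_eq_fderiv, (hf.differentiableAt hp).lineDeriv_eq_fderiv,
      zpow_sub_one₀ hc.ne', mul_right_comm, ← hmul]
    field_simp

lemma exists_abs_le [ProperSpace E] (hf : IsSmoothHomogeneous 0 f) :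
    ∃ M, ∀ p ≠ 0, |f p| ≤ M := by
  have hcont : ContinuousOn f (Metric.sphere 0 1) :=
    hf.contDiffOn.continuousOn.mono fun p hp ↦ ne_zero_of_mem_unit_sphere ⟨p, hp⟩
  obtain ⟨M, hM⟩ := (isCompact_sphere 0 1).exists_bound_of_continuousOn hcont
  refine ⟨M, fun p hp ↦ ?_⟩
  have hradial : f (‖p‖⁻¹ • p) = f p := by
    simpa using hf.map_smul (inv_pos.2 (norm_pos_iff.2 hp)) hp
  rw [← hradial]
  exact hM _ (by simp [norm_smul, hp])

end IsSmoothHomogeneous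

/-- Off the origin, `f = P log ρ + R` with `P` and `R` smooth and homogeneous of degree `d`. The
remainder `R` is existentially quantified, so that only the coefficient `P` of the logarithm has to
be tracked under differentiation. -/
structure HasLogCoeff (ρ : E → ℝ) (d : ℤ) (f P : E → ℝ) : Prop where
  coeff : IsSmoothHomogeneous d P
  exists_remainder :
    ∃ R, IsSmoothHomogeneous d R ∧ ∀ p ≠ 0, f p = P p * Real.log (ρ p) + R p

lemma IsSmoothHomogeneous.hasLogCoeff_mul_log (hP : IsSmoothHomogeneous d P) (ρ : E → ℝ) :
    HasLogCoeff ρ d (fun p ↦ P p * Real.log (ρ p)) P :=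
  ⟨hP, 0, .zero, by simp⟩

lemma lineDeriv_mul_log_add {R : E → ℝ} {p : E} (hP : DifferentiableAt ℝ P p)
    (hρ : DifferentiableAt ℝ ρ p) (hR : DifferentiableAt ℝ R p) (hρ₀ : ρ p ≠ 0) (v : E) :
    lineDeriv ℝ (fun q ↦ P q * Real.log (ρ q) + R q) p v =
      lineDeriv ℝ P p v * Real.log (ρ p) + (P p * lineDeriv ℝ ρ p v / ρ p + lineDeriv ℝ R p v) := by
  have hderiv := ((hP.hasFDerivAt.mul (hρ.hasFDerivAt.log hρ₀)).add hR.hasFDerivAt).hasLineDerivAt v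
  rw [hP.lineDeriv_eq_fderiv, hρ.lineDeriv_eq_fderiv, hR.lineDeriv_eq_fderiv]
  refine hderiv.lineDeriv.trans ?_
  simp only [add_apply, smul_apply, smul_eq_mul]
  ring

protected lemma HasLogCoeff.lineDeriv (hf : HasLogCoeff ρ d f P) (hρ : IsSmoothHomogeneous e ρ)
    (hρ₀ : ∀ p ≠ 0, ρ p ≠ 0) (v : E) :
    HasLogCoeff ρ (d - 1) (fun p ↦ lineDeriv ℝ f p v) (fun p ↦ lineDeriv ℝ P p v) := by
  obtain ⟨hP, R, hR, hfR⟩ := hf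
  have hlog : IsSmoothHomogeneous (d - 1) (P * (fun p ↦ lineDeriv ℝ ρ p v) / ρ) := by
    convert (hP.mul (hρ.lineDeriv v)).div hρ hρ₀ using 1
    ring
  refine ⟨hP.lineDeriv v, _, hlog.add (hR.lineDeriv v), fun p hp ↦ ?_⟩
  have hfR_nhds : f =ᶠ[𝓝 p] fun q ↦ P q * Real.log (ρ q) + R q := by
    filter_upwards [isOpen_ne.mem_nhds hp] with q hq using hfR q hq
  rw [hfR_nhds.lineDeriv_eq]
  exact lineDeriv_mul_log_add (hP.differentiableAt hp) (hρ.differentiableAt hp)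
    (hR.differentiableAt hp) (hρ₀ p hp) v

end Homogeneous

lemma uncurry_pdx (f : ℝ → ℝ → ℝ) :
    (pdx f).uncurry = fun p ↦ lineDeriv ℝ f.uncurry p (1, 0) := by
  ext ⟨x, y⟩
  simp [pdx, lineDeriv, deriv_comp_const_add (f := fun t ↦ f t y)]

lemma uncurry_pdy (f : ℝ → ℝ → ℝ) :
    (pdy f).uncurry = fun p ↦ lineDeriv ℝ f.uncurry p (0, 1) := by
  ext ⟨x, y⟩
  simp [pdy, lineDeriv, deriv_comp_const_add (f := fun t ↦ f x t)]

lemma sq_add_sq_pos_iff {R : Type*} [Ring R] [LinearOrder R] [IsStrictOrderedRing R] {x y : R} :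
    0 < x ^ 2 + y ^ 2 ↔ (x, y) ≠ 0 := by
  have hx := sq_nonneg x
  have hy := sq_nonneg y
  rw [(add_nonneg hx hy).lt_iff_ne', Ne, add_eq_zero_iff_of_nonneg hx hy, sq_eq_zero_iff,
    sq_eq_zero_iff, Ne, Prod.mk_eq_zero]

lemma isSmoothHomogeneous_sq_add_sq :
    IsSmoothHomogeneous 2 (fun p : ℝ × ℝ ↦ p.1 ^ 2 + p.2 ^ 2) where
  contDiffOn := by fun_prop
  map_smul c p _ _ := by
    simp only [Prod.smul_fst, Prod.smul_snd, smul_eq_mul, zpow_ofNat]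
    ring

lemma isSmoothHomogeneous_Q : IsSmoothHomogeneous 4 Q.uncurry where
  contDiffOn := by
    simp only [Function.uncurry_def, Q]
    fun_prop
  map_smul c p _ _ := by
    simp only [Function.uncurry_def, Q, Prod.smul_fst, Prod.smul_snd, smul_eq_mul, zpow_ofNat]
    ring

lemma pdx_pdx_pdy_pdy_Q (x y : ℝ) : pdx (pdx (pdy (pdy Q))) x y = -24 := by
  have hy : pdy Q = fun x y ↦ 4 * y ^ 3 - 12 * x ^ 2 * y := by
    ext x y
    calc pdy Q x y = 4 * y ^ 3 - 6 * x ^ 2 * (2 * y) := by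
          simp (disch := fun_prop) [pdy, Q, deriv_fun_sub]
      _ = 4 * y ^ 3 - 12 * x ^ 2 * y := by ring
  have hyy : pdy (pdy Q) = fun x y ↦ 12 * y ^ 2 - 12 * x ^ 2 := by
    ext x y
    calc pdy (pdy Q) x y = 4 * (3 * y ^ 2) - 12 * x ^ 2 := by
          rw [hy]
          simp (disch := fun_prop) [pdy, deriv_fun_sub]
      _ = 12 * y ^ 2 - 12 * x ^ 2 := by ring
  have hxyy : pdx (pdy (pdy Q)) = fun x _ ↦ -24 * x := by
    ext x y
    calc pdx (pdy (pdy Q)) x y = -(12 * (2 * x)) := by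
          rw [hyy]
          simp [pdx]
      _ = -24 * x := by ring
  rw [hxyy]
  simp [pdx]

theorem mixed_fourth_derivative_G_log_singularity_general {P : ℝ → ℝ → ℝ}
    (hP : IsSmoothHomogeneous 4 P.uncurry) :
    ∃ H : ℝ → ℝ → ℝ,
      (∃ M : ℝ, ∀ x y : ℝ, 0 < x ^ 2 + y ^ 2 → |H x y| ≤ M) ∧
      (∀ x y : ℝ, 0 < x ^ 2 + y ^ 2 →
        pdx (pdx (pdy (pdy fun x y ↦ P x y * Real.log (x ^ 2 + y ^ 2)))) x y =
          pdx (pdx (pdy (pdy P))) x y * Real.log (x ^ 2 + y ^ 2) + H x y) := by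
  let r : ℝ × ℝ → ℝ := fun p ↦ p.1 ^ 2 + p.2 ^ 2
  have hr : IsSmoothHomogeneous 2 r := isSmoothHomogeneous_sq_add_sq
  have hr₀ : ∀ p ≠ 0, r p ≠ 0 := fun p hp ↦ (sq_add_sq_pos_iff.2 hp).ne'
  have hlog : HasLogCoeff r 0
      (pdx (pdx (pdy (pdy fun x y ↦ P x y * Real.log (x ^ 2 + y ^ 2))))).uncurry
      (pdx (pdx (pdy (pdy P)))).uncurry := by
    simp only [uncurry_pdx, uncurry_pdy]
    exact hP.hasLogCoeff_mul_log r |>.lineDeriv hr hr₀ (0, 1) |>.lineDeriv hr hr₀ (0, 1)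
      |>.lineDeriv hr hr₀ (1, 0) |>.lineDeriv hr hr₀ (1, 0)
  obtain ⟨R, hR, hexpansion⟩ := hlog.exists_remainder
  obtain ⟨M, hM⟩ := hR.exists_abs_le
  exact ⟨R.curry, ⟨M, fun x y h ↦ hM (x, y) (sq_add_sq_pos_iff.1 h)⟩,
    fun x y h ↦ hexpansion (x, y) (sq_add_sq_pos_iff.1 h)⟩

/-- On the punctured unit ball, `∂ₓ∂ₓ∂_y∂_y G = −24 log(x² + y²) + H(x,y)` with `H`
bounded there: a logarithmic singularity at the origin. -/
theorem mixed_fourth_derivative_G_log_singularity :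
    ∃ H : ℝ → ℝ → ℝ,
      (∃ M : ℝ, ∀ x y : ℝ, 0 < x ^ 2 + y ^ 2 → x ^ 2 + y ^ 2 < 1 → |H x y| ≤ M) ∧
      (∀ x y : ℝ, 0 < x ^ 2 + y ^ 2 → x ^ 2 + y ^ 2 < 1 →
        pdx (pdx (pdy (pdy G))) x y = -24 * Real.log (x ^ 2 + y ^ 2) + H x y) := by
  obtain ⟨H, ⟨M, hM⟩, hH⟩ := mixed_fourth_derivative_G_log_singularity_general isSmoothHomogeneous_Q
  exact ⟨H, ⟨M, fun x y h _ ↦ hM x y h⟩, fun x y h _ ↦ pdx_pdx_pdy_pdy_Q x y ▸ hH x y h⟩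
end

section
/- Let Q(x,y) = x⁴ + y⁴ − 6x²y² and G(x,y) = Q(x,y) · log(x² + y²), defined for (x,y) ∈ ℝ² \ {(0,0)}. Fix C > 0. Then for every η > 0 and every δ with 0 < δ ≤ 6η/C, and for every function K : B₁ \ {0} → ℝ satisfying |K(x,y)| ≤ C(1 + |log(x² + y²)|) on B₁ \ {0}, there exists r ∈ (0,1) such that |η δ ∂⁴G/∂x²∂y²(x,y) + δ² K(x,y)| ≥ 12 η δ |log(x² + y²)| for all (x,y) with 0 < x² + y² < r². -/
/-!
Write `s = x² + y²`. A function `P log s + N / s ^ k`, with `P` and `N / s ^ k` homogeneous of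
degree `m + 1`, has partial derivatives of the same shape and of degree `m`, and `P` is simply
replaced by its partial derivative: the logarithm, once differentiated, contributes only to the
rational part. Since `Q` is homogeneous of degree `4`, `∂⁴G/∂x²∂y²` has degree `0`, hence it equals
`(∂⁴Q/∂x²∂y²) log s = -24 log s` up to a bounded error. After division by `η δ` the perturbation
is at most `κ (1 + |log s|)` with `κ = C δ / η ≤ 6`; it can only lower the coefficient of `|log s|`
to `24 - κ`, and any smaller coefficient, such as `12`, absorbs the bounded error near the origin.
-/

open MvPolynomial Function

section PolynomialLemmas

variable {σ 𝕜 : Type*}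

lemma hasDerivAt_eval_update [DecidableEq σ] [NontriviallyNormedField 𝕜] (p : MvPolynomial σ 𝕜)
    (v : σ → 𝕜) (i : σ) :
    HasDerivAt (fun t => eval (update v i t) p) (eval v (pderiv i p)) (v i) := by
  induction p using MvPolynomial.induction_on with
  | C a => simpa using hasDerivAt_const (v i) a
  | add p q hp hq => simpa using hp.fun_add hq
  | mul_X p j hp =>
    have hX : HasDerivAt (fun t => update v i t j) ((Pi.single i 1 : σ → 𝕜) j) (v i) :=
      hasDerivAt_pi.1 (hasDerivAt_update v i (v i)) j
    simpa [pderiv_mul, pderiv_X, Pi.single_apply, apply_ite, ite_add, mul_comm, add_comm]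
      using hp.fun_mul hX

lemma norm_eval_le_of_isHomogeneous [Fintype σ] [NormedField 𝕜] {p : MvPolynomial σ 𝕜} {n : ℕ}
    (hp : p.IsHomogeneous n) (v : σ → 𝕜) :
    ‖eval v p‖ ≤ (∑ d ∈ p.support, ‖p.coeff d‖) * ‖v‖ ^ n := by
  rw [eval_eq', Finset.sum_mul]
  refine norm_sum_le_of_le _ fun d hd => ?_
  rw [norm_mul, norm_prod]
  gcongr
  calc ∏ i, ‖v i ^ d i‖ ≤ ∏ i, ‖v‖ ^ d i := by
        gcongr with i
        rw [norm_pow]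
        gcongr
        exact norm_le_pi_norm v i
    _ = ‖v‖ ^ n := by
      rw [Finset.prod_pow_eq_pow_sum, ← Finsupp.degree_eq_sum,
        hp.degree_eq_sum_deg_support hd, Finsupp.degree_apply]

lemma isHomogeneous_psum {R : Type*} [Fintype σ] [CommSemiring R] (n : ℕ) :
    (psum σ R n).IsHomogeneous n :=
  .sum _ _ _ fun i _ => isHomogeneous_X_pow i n

lemma norm_sq_le_sum_sq [Fintype σ] (v : σ → ℝ) : ‖v‖ ^ 2 ≤ ∑ i, v i ^ 2 := by
  refine (Real.le_sqrt (norm_nonneg v) (by positivity)).1 ?_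
  refine (pi_norm_le_iff_of_nonneg (by positivity)).2 fun i => Real.le_sqrt_of_sq_le ?_
  rw [Real.norm_eq_abs, sq_abs]
  exact Finset.single_le_sum (fun j _ => sq_nonneg (v j)) (Finset.mem_univ i)

end PolynomialLemmas

/-- `HasLogPart f P m` says that, off the origin, `f` is the sum of `P log s`, where `s = ∑ i, vᵢ²`
and `P` is a homogeneous polynomial of degree `m`, and of a rational function that is homogeneous
of the same degree `m` with a power of `s` as denominator. The condition `0 < s` encodes `v ≠ 0`. -/
structure HasLogPart {σ : Type*} [Fintype σ] (f : (σ → ℝ) → ℝ) (P : MvPolynomial σ ℝ) (m : ℕ) :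
    Prop where
  isHomogeneous : P.IsHomogeneous m
  exists_eq : ∃ (k : ℕ) (N : MvPolynomial σ ℝ), N.IsHomogeneous (m + 2 * k) ∧
    ∀ v, 0 < ∑ i, v i ^ 2 →
      f v = eval v P * Real.log (∑ i, v i ^ 2) + eval v N / (∑ i, v i ^ 2) ^ k

lemma hasDerivAt_mul_log_add_div_pow {p n s : ℝ → ℝ} {p' n' s' t : ℝ} (k : ℕ)
    (hp : HasDerivAt p p' t) (hn : HasDerivAt n n' t) (hs : HasDerivAt s s' t) (ht : s t ≠ 0) :
    HasDerivAt (fun u => p u * Real.log (s u) + n u / s u ^ k)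
      (p' * Real.log (s t) +
        (p t * s' * s t ^ k + n' * s t - k * (n t * s')) / s t ^ (k + 1)) t := by
  refine ((hp.mul (hs.log ht)).add (hn.div (hs.pow k) (pow_ne_zero k ht))).congr_deriv ?_
  cases k with
  | zero => simp only [Pi.pow_apply, CharP.cast_eq_zero]; field_simp; ring
  | succ k => simp only [Pi.pow_apply, Nat.add_sub_cancel]; field_simp; ring

namespace HasLogPart

variable {σ : Type*} [Fintype σ] {f : (σ → ℝ) → ℝ} {P : MvPolynomial σ ℝ} {m : ℕ}

lemma deriv_update [DecidableEq σ] (hf : HasLogPart f P (m + 1)) (i : σ) :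
    HasLogPart (fun v => deriv (fun t => f (update v i t)) (v i)) (pderiv i P) m := by
  obtain ⟨hP, k, N, hN, hfv⟩ := hf
  have hS := isHomogeneous_psum (σ := σ) (R := ℝ) 2
  have eval_S (v : σ → ℝ) : eval v (psum σ ℝ 2) = ∑ j, v j ^ 2 := by simp [psum]
  simp only [← eval_S] at hfv
  set S := psum σ ℝ 2
  refine ⟨hP.pderiv, k + 1,
    P * pderiv i S * S ^ k + pderiv i N * S - C (k : ℝ) * (N * pderiv i S), ?_, fun v hv => ?_⟩
  · have hPS : (P * pderiv i S * S ^ k).IsHomogeneous (m + 2 * (k + 1)) := by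
      convert (hP.mul hS.pderiv).mul (hS.pow k) using 1; lia
    have hN'S : (pderiv i N * S).IsHomogeneous (m + 2 * (k + 1)) := by
      convert hN.pderiv.mul hS using 1; lia
    have hNS : (N * pderiv i S).IsHomogeneous (m + 2 * (k + 1)) := by
      convert hN.mul hS.pderiv using 1; lia
    exact (hPS.add hN'S).sub (hNS.C_mul _)
  · rw [← eval_S] at hv ⊢
    have hSv := hasDerivAt_eval_update S v i
    have hform := hasDerivAt_mul_log_add_div_pow k (hasDerivAt_eval_update P v i)
      (hasDerivAt_eval_update N v i) hSv (by simpa using hv.ne')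
    have heq : (fun t => f (update v i t)) =ᶠ[nhds (v i)] _ :=
      (hSv.continuousAt.eventually_const_lt (by simpa using hv)).mono fun t => hfv (update v i t)
    simpa using heq.deriv_eq.trans hform.deriv

lemma exists_abs_sub_mul_log_le (hf : HasLogPart f P 0) :
    ∃ M, ∀ v, 0 < ∑ i, v i ^ 2 → |f v - eval v P * Real.log (∑ i, v i ^ 2)| ≤ M := by
  obtain ⟨-, k, N, hN, hfv⟩ := hf
  refine ⟨∑ d ∈ N.support, ‖N.coeff d‖, fun v hv => ?_⟩
  rw [hfv v hv, add_sub_cancel_left, abs_div, abs_of_pos (pow_pos hv k),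
    div_le_iff₀ (pow_pos hv k)]
  calc |eval v N| ≤ (∑ d ∈ N.support, ‖N.coeff d‖) * ‖v‖ ^ (0 + 2 * k) :=
        norm_eval_le_of_isHomogeneous hN v
    _ ≤ (∑ d ∈ N.support, ‖N.coeff d‖) * (∑ i, v i ^ 2) ^ k := by
      rw [zero_add, pow_mul]
      gcongr
      exact norm_sq_le_sum_sq v

variable {g : ℝ → ℝ → ℝ} {P : MvPolynomial (Fin 2) ℝ}

protected lemma pdx (hg : HasLogPart (fun v => g (v 0) (v 1)) P (m + 1)) :
    HasLogPart (fun v => pdx g (v 0) (v 1)) (pderiv 0 P) m :=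
  hg.deriv_update 0

protected lemma pdy (hg : HasLogPart (fun v => g (v 0) (v 1)) P (m + 1)) :
    HasLogPart (fun v => pdy g (v 0) (v 1)) (pderiv 1 P) m :=
  hg.deriv_update 1

end HasLogPart

/-- The polynomial function `Q` as an element of `ℝ[X₀, X₁]`, so that its derivatives can be
computed algebraically by `MvPolynomial.pderiv`. -/
noncomputable def polyQ : MvPolynomial (Fin 2) ℝ :=
  X 0 ^ 4 + X 1 ^ 4 - C 6 * (X 0 ^ 2 * X 1 ^ 2)

lemma isHomogeneous_polyQ : polyQ.IsHomogeneous 4 :=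
  ((isHomogeneous_X_pow 0 4).add (isHomogeneous_X_pow 1 4)).sub
    (((isHomogeneous_X_pow 0 2).mul (isHomogeneous_X_pow 1 2)).C_mul 6)

lemma pderiv_zero_zero_one_one_polyQ :
    pderiv 0 (pderiv 0 (pderiv 1 (pderiv 1 polyQ))) = C (-24) := by
  have pderiv_ofNat (i : Fin 2) (n : ℕ) [n.AtLeastTwo] :
      pderiv i (OfNat.ofNat n : MvPolynomial (Fin 2) ℝ) = 0 := Derivation.map_natCast _ n
  have C_neg_24 : (C (-24) : MvPolynomial (Fin 2) ℝ) = -(C 6 * (2 * 2)) := by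
    rw [← map_ofNat C 2, ← C_mul, ← C_mul, ← C_neg]
    norm_num
  rw [C_neg_24]
  simp [polyQ, pderiv_ofNat]

lemma hasLogPart_G : HasLogPart (fun v => G (v 0) (v 1)) polyQ 4 :=
  ⟨isHomogeneous_polyQ, 0, 0, isHomogeneous_zero _ _ _, fun v _ => by
    simp [G, Q, polyQ, mul_assoc]⟩

lemma exists_abs_pdx_pdx_pdy_pdy_G_add_log_le :
    ∃ M, ∀ x y : ℝ, 0 < x ^ 2 + y ^ 2 →
      |pdx (pdx (pdy (pdy G))) x y + 24 * Real.log (x ^ 2 + y ^ 2)| ≤ M := by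
  obtain ⟨M, hM⟩ := hasLogPart_G.pdy.pdy.pdx.pdx.exists_abs_sub_mul_log_le
  refine ⟨M, fun x y hxy => ?_⟩
  simpa [pderiv_zero_zero_one_one_polyQ] using hM ![x, y] (by simpa using hxy)

lemma exists_radius_le_abs_log (B : ℝ) :
    ∃ r : ℝ, 0 < r ∧ r < 1 ∧ ∀ s, 0 < s → s < r ^ 2 → B ≤ |Real.log s| := by
  have hB : -(|B| + 1) < 0 := by linarith [abs_nonneg B]
  refine ⟨Real.exp (-(|B| + 1)), Real.exp_pos _, Real.exp_lt_one_iff.2 hB, fun s hs hsr => ?_⟩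
  have hlog : Real.log s < 2 * -(|B| + 1) := by
    simpa using Real.log_lt_log hs hsr
  linarith [neg_le_abs (Real.log s), le_abs_self B, abs_nonneg B]

lemma exists_radius_mul_abs_log_le_abs_add {α : Type*} {s f K : α → ℝ} {A c κ M : ℝ}
    (hf : ∀ p, 0 < s p → |f p - c * Real.log (s p)| ≤ M)
    (hK : ∀ p, 0 < s p → s p < 1 → |K p| ≤ κ * (1 + |Real.log (s p)|)) (hA : A + κ < |c|) :
    ∃ r : ℝ, 0 < r ∧ r < 1 ∧
      ∀ p, 0 < s p → s p < r ^ 2 → A * |Real.log (s p)| ≤ |f p + K p| := by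
  have hgap : 0 < |c| - κ - A := by linarith
  obtain ⟨r, hr0, hr1, hr⟩ := exists_radius_le_abs_log ((M + κ) / (|c| - κ - A))
  refine ⟨r, hr0, hr1, fun p hs hsr => ?_⟩
  have hs1 : s p < 1 := hsr.trans (pow_lt_one₀ hr0.le hr1 two_ne_zero)
  have hlog : M + κ ≤ |Real.log (s p)| * (|c| - κ - A) := (div_le_iff₀ hgap).1 (hr _ hs hsr)
  calc A * |Real.log (s p)|
      ≤ |c| * |Real.log (s p)| - M - κ * (1 + |Real.log (s p)|) := by linarith
    _ ≤ |c * Real.log (s p)| - |f p - c * Real.log (s p)| - |K p| := by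
      rw [abs_mul]
      gcongr
      exacts [hf p hs, hK p hs hs1]
    _ ≤ |f p + K p| := by
      have hsplit : f p + K p + -K p + (c * Real.log (s p) - f p) = c * Real.log (s p) := by ring
      have htri := abs_add_three (f p + K p) (-K p) (c * Real.log (s p) - f p)
      rw [hsplit, abs_neg, abs_sub_comm _ (f p)] at htri
      linarith

theorem log_singularity_survives_perturbation_general {A C η δ : ℝ} {K : ℝ → ℝ → ℝ} (hδ : 0 ≤ δ)
    (hA : A * η + C * δ < 24 * |η|)
    (hK : ∀ x y : ℝ, 0 < x ^ 2 + y ^ 2 → x ^ 2 + y ^ 2 < 1 →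
      |K x y| ≤ C * (1 + |Real.log (x ^ 2 + y ^ 2)|)) :
    ∃ r : ℝ, 0 < r ∧ r < 1 ∧
      ∀ x y : ℝ, 0 < x ^ 2 + y ^ 2 → x ^ 2 + y ^ 2 < r ^ 2 →
        A * η * δ * |Real.log (x ^ 2 + y ^ 2)| ≤
          |η * δ * pdx (pdx (pdy (pdy G))) x y + δ ^ 2 * K x y| := by
  obtain ⟨M, hM⟩ := exists_abs_pdx_pdx_pdy_pdy_G_add_log_le
  have main_bound (p : ℝ × ℝ) (hp : 0 < p.1 ^ 2 + p.2 ^ 2) :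
      |η * pdx (pdx (pdy (pdy G))) p.1 p.2 - η * -24 * Real.log (p.1 ^ 2 + p.2 ^ 2)| ≤ |η| * M := by
    rw [mul_assoc, ← mul_sub, abs_mul, neg_mul, sub_neg_eq_add]
    gcongr
    exact hM p.1 p.2 hp
  have perturbation_bound (p : ℝ × ℝ) (hp : 0 < p.1 ^ 2 + p.2 ^ 2) (hp1 : p.1 ^ 2 + p.2 ^ 2 < 1) :
      |δ * K p.1 p.2| ≤ δ * C * (1 + |Real.log (p.1 ^ 2 + p.2 ^ 2)|) := by
    rw [abs_mul, abs_of_nonneg hδ, mul_assoc]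
    gcongr
    exact hK p.1 p.2 hp hp1
  have hgap : A * η + δ * C < |η * -24| := by
    rw [abs_mul, abs_neg, Nat.abs_ofNat]
    linarith
  obtain ⟨r, hr0, hr1, hr⟩ :=
    exists_radius_mul_abs_log_le_abs_add main_bound perturbation_bound hgap
  refine ⟨r, hr0, hr1, fun x y hxy hxyr => ?_⟩
  calc A * η * δ * |Real.log (x ^ 2 + y ^ 2)| = δ * (A * η * |Real.log (x ^ 2 + y ^ 2)|) := by ring
    _ ≤ δ * |η * pdx (pdx (pdy (pdy G))) x y + δ * K x y| := by
      gcongr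
      exact hr (x, y) hxy hxyr
    _ = |δ * (η * pdx (pdx (pdy (pdy G))) x y + δ * K x y)| := by rw [abs_mul, abs_of_nonneg hδ]
    _ = |η * δ * pdx (pdx (pdy (pdy G))) x y + δ ^ 2 * K x y| := by ring_nf

/-- The logarithmic singularity of `η δ ∂⁴G/∂x²∂y²` survives any perturbation of size
`δ²` with at most logarithmic growth, provided `δ ≤ 6η/C`. -/
theorem log_singularity_survives_perturbation (C : ℝ) (hC : 0 < C) :
    ∀ η : ℝ, 0 < η → ∀ δ : ℝ, 0 < δ → δ ≤ 6 * η / C →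
      ∀ K : ℝ → ℝ → ℝ,
        (∀ x y : ℝ, 0 < x ^ 2 + y ^ 2 → x ^ 2 + y ^ 2 < 1 →
          |K x y| ≤ C * (1 + |Real.log (x ^ 2 + y ^ 2)|)) →
        ∃ r : ℝ, 0 < r ∧ r < 1 ∧
          ∀ x y : ℝ, 0 < x ^ 2 + y ^ 2 → x ^ 2 + y ^ 2 < r ^ 2 →
            12 * η * δ * |Real.log (x ^ 2 + y ^ 2)| ≤
              |η * δ * pdx (pdx (pdy (pdy G))) x y + δ ^ 2 * K x y| := by
  intro η hη δ hδ hδC K hK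
  have hCδ : δ * C ≤ 6 * η := (le_div_iff₀ hC).1 hδC
  exact log_singularity_survives_perturbation_general hδ.le (by rw [abs_of_pos hη]; linarith) hK
end
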